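/- arXiv:1907.11998 — 2 statements merged into one kernel-verified Lean document; each statement's English description precedes it below -/
import Mathlib

section
/- Let n ≥ 1 be an integer, δ > 0 and β < n+1, and let u be a Schwartz function on ℝⁿ. Then the function L^{δ,β}u(x) = c^{δ,β} ∫_{B_δ(x)} (u(y)−u(x))/‖y−x‖^β dy is well defined (the integrand is Lebesgue integrable for each x), and its Fourier transform satisfies (L^{δ,β}u)^(ν) = m(ν) û(ν) for every ν, where m(ν) = c^{δ,β} ∫_{B_δ(0)} (cos(ν·z)−1)/‖z‖^β dz. In other words, L^{δ,β} acts on Schwartz functions as a Fourier multiplier operator with multiplier m. -/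
/-!
The operator is an average of difference quotients of translates: after the substitution
`y = x + z`, `L u(x) = c ∫_{|z| < δ} (u(x + z) - u(x)) / |z|^β dz`. Taking Fourier transforms in `x`
under the `z`-integral turns the translation `u(· + z)` into multiplication by `e^{iν·z}`, hence the
multiplier is `c ∫_{|z| < δ} (e^{iν·z} - 1) / |z|^β dz`, and the odd (sine) part of this integral
vanishes because the ball and the kernel are symmetric under `z ↦ -z`.

Two estimates make this rigorous. The weight `|z| / |z|^β = |z|^{1-β}` is integrable on the ball
because `β < n + 1` (`integrableOn_norm_div_rpow`), and the mean value inequality together with the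
rapid decay of the derivative of `u` gives `|u(x + z) - u(x)| ≤ C (1 + |x|)^{-(n+1)} |z|` for
`|z| < δ` (`exists_translate_sub_bound`). Their product dominates the integrand, which yields both
the pointwise integrability and the hypothesis of Fubini's theorem.
-/


open MeasureTheory Real
open scoped RealInnerProductSpace

/-- The Fourier transform with the convention `𝓕f(ν) = ∫ e^{-iν·x} f(x) dx`. -/
noncomputable def fourierTransform (n : ℕ) (f : EuclideanSpace ℝ (Fin n) → ℂ)
    (ν : EuclideanSpace ℝ (Fin n)) : ℂ :=
  ∫ x : EuclideanSpace ℝ (Fin n), Complex.exp (-(⟪ν, x⟫ : ℝ) * Complex.I) * f x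

/-- The Fourier multiplier of the nonlocal Laplacian `L^{δ,β}`. -/
noncomputable def nonlocalMultiplier (n : ℕ) (δ β : ℝ) (ν : EuclideanSpace ℝ (Fin n)) : ℝ :=
  (2 * ((n : ℝ) + 2 - β) * Real.Gamma ((n : ℝ) / 2 + 1) /
      (Real.pi ^ ((n : ℝ) / 2) * δ ^ ((n : ℝ) + 2 - β))) *
    ∫ z in Metric.ball (0 : EuclideanSpace ℝ (Fin n)) δ, (Real.cos ⟪ν, z⟫ - 1) / ‖z‖ ^ β

/-- First-order cancellation `‖z‖` tames the singularity `‖z‖^{-β}` as soon as `β < n + 1`. -/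
lemma integrableOn_norm_div_rpow (n : ℕ) (hn : 1 ≤ n) (δ β : ℝ) (hβ : β < (n : ℝ) + 1) :
    IntegrableOn (fun z : EuclideanSpace ℝ (Fin n) => ‖z‖ / ‖z‖ ^ β) (Metric.ball 0 δ) := by
  refine integrableOn_ball_of_norm_le_rpow (C := 1) (α := β - 1) (by simpa using hn)
    (by simp; linarith) (Filter.Eventually.of_forall fun z => ?_)
    (Measurable.aestronglyMeasurable (by fun_prop))
  rcases eq_or_ne z 0 with rfl | hz
  · simp only [norm_zero, zero_div, one_mul]
    positivity
  · have hz' : 0 < ‖z‖ := norm_pos_iff.mpr hz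
    rw [Real.norm_of_nonneg (by positivity), one_mul, neg_sub, Real.rpow_sub hz', Real.rpow_one]

/-- A Schwartz function has Lipschitz increments over bounded shifts, with a Lipschitz constant that
decays integrably in the base point. -/
lemma exists_translate_sub_bound (n : ℕ) (δ : ℝ) (hδ : 0 < δ)
    (u : SchwartzMap (EuclideanSpace ℝ (Fin n)) ℂ) :
    ∃ C : ℝ, ∀ x z : EuclideanSpace ℝ (Fin n), z ∈ Metric.ball 0 δ →
      ‖u (x + z) - u x‖ ≤ C * (1 + ‖x‖) ^ (-((n : ℝ) + 1)) * ‖z‖ := by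
  obtain ⟨C, hC⟩ : ∃ C : ℝ, ∀ x, (1 + ‖x‖) ^ (n + 1) * ‖fderiv ℝ u x‖ ≤ C :=
    ⟨_, fun x => by
      simpa only [norm_iteratedFDeriv_one] using SchwartzMap.one_add_le_sup_seminorm_apply (𝕜 := ℝ)
        (m := (n + 1, 1)) le_rfl le_rfl u x⟩
  refine ⟨(1 + δ) ^ (n + 1) * C, fun x z hz => ?_⟩
  have hz' : ‖z‖ < δ := by simpa using hz
  have key : ∀ y ∈ Metric.ball x δ,
      ‖fderiv ℝ u y‖ ≤ (1 + δ) ^ (n + 1) * C * (1 + ‖x‖) ^ (-((n : ℝ) + 1)) := by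
    intro y hy
    have hxy : ‖y - x‖ < δ := by simpa [dist_eq_norm] using hy
    -- Shifting by at most `δ` changes `1 + ‖x‖` by a factor of at most `1 + δ`.
    have h1 : 1 + ‖x‖ ≤ (1 + δ) * (1 + ‖y‖) := by
      have := norm_sub_norm_le x y
      rw [norm_sub_rev] at this
      nlinarith [norm_nonneg y]
    have h2 : (1 + ‖x‖) ^ (n + 1) * ‖fderiv ℝ u y‖ ≤ (1 + δ) ^ (n + 1) * C := by
      calc _ ≤ ((1 + δ) * (1 + ‖y‖)) ^ (n + 1) * ‖fderiv ℝ u y‖ := by gcongr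
        _ = (1 + δ) ^ (n + 1) * ((1 + ‖y‖) ^ (n + 1) * ‖fderiv ℝ u y‖) := by
          rw [mul_pow, mul_assoc]
        _ ≤ _ := by gcongr; exact hC y
    have h3 : (1 + ‖x‖) ^ (-((n : ℝ) + 1)) = ((1 + ‖x‖) ^ (n + 1))⁻¹ := by
      rw [Real.rpow_neg (by positivity)]
      norm_cast
    rw [h3, ← div_eq_mul_inv, le_div_iff₀ (by positivity)]
    linarith
  have := (convex_ball x δ).norm_image_sub_le_of_norm_fderiv_le (𝕜 := ℝ) (f := u) (y := x + z)
    (fun y _ => u.differentiableAt) key (Metric.mem_ball_self hδ) (by simpa using hz')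
  simpa using this

/-- The dominating estimate that justifies Fubini's theorem. -/
lemma integrable_prod_translate_sub (n : ℕ) (hn : 1 ≤ n) (δ β : ℝ) (hδ : 0 < δ)
    (hβ : β < (n : ℝ) + 1) (u : SchwartzMap (EuclideanSpace ℝ (Fin n)) ℂ)
    (ν : EuclideanSpace ℝ (Fin n)) :
    Integrable (Function.uncurry fun x z : EuclideanSpace ℝ (Fin n) =>
        Complex.exp (-(⟪ν, x⟫ : ℝ) * Complex.I) * ((u (x + z) - u x) / ((‖z‖ ^ β : ℝ) : ℂ)))
      (volume.prod (volume.restrict (Metric.ball 0 δ))) := by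
  obtain ⟨C, hC⟩ := exists_translate_sub_bound n δ hδ u
  have hx : Integrable (fun x : EuclideanSpace ℝ (Fin n) =>
      C * (1 + ‖x‖) ^ (-((n : ℝ) + 1))) volume :=
    (integrable_one_add_norm (by simp)).const_mul C
  refine (hx.mul_prod (integrableOn_norm_div_rpow n hn δ β hβ)).mono' ?_ ?_
  · have hu : Measurable u := u.continuous.measurable
    refine Measurable.aestronglyMeasurable ?_
    unfold Function.uncurry
    fun_prop
  · have hb : ∀ᵐ p ∂(volume : Measure (EuclideanSpace ℝ (Fin n))).prod
        (volume.restrict (Metric.ball (0 : EuclideanSpace ℝ (Fin n)) δ)),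
        p.2 ∈ Metric.ball 0 δ :=
      Measure.quasiMeasurePreserving_snd.ae (ae_restrict_mem Metric.isOpen_ball.measurableSet)
    filter_upwards [hb] with p hp
    have he : ‖Complex.exp (-(⟪ν, p.1⟫ : ℝ) * Complex.I)‖ = 1 := by
      exact_mod_cast Complex.norm_exp_ofReal_mul_I (-⟪ν, p.1⟫)
    have hk : (0 : ℝ) ≤ ‖p.2‖ ^ β := by positivity
    simp only [Function.uncurry, norm_mul, he, one_mul, norm_div, Complex.norm_real,
      Real.norm_of_nonneg hk]
    rw [← mul_div_assoc]
    gcongr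
    exact hC _ _ hp

/-- By the symmetry `z ↦ -z` only the cosine part of `e^{iν·z}` contributes to the multiplier. -/
lemma integral_exp_sub_one_eq (n : ℕ) (hn : 1 ≤ n) (δ β : ℝ) (hβ : β < (n : ℝ) + 1)
    (ν : EuclideanSpace ℝ (Fin n)) :
    ∫ z in Metric.ball (0 : EuclideanSpace ℝ (Fin n)) δ,
      (Complex.exp ((⟪ν, z⟫ : ℝ) * Complex.I) - 1) / ((‖z‖ ^ β : ℝ) : ℂ) =
    ((∫ z in Metric.ball (0 : EuclideanSpace ℝ (Fin n)) δ,
      (Real.cos ⟪ν, z⟫ - 1) / ‖z‖ ^ β : ℝ) : ℂ) := by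
  set f : EuclideanSpace ℝ (Fin n) → ℂ := fun z =>
    (Complex.exp ((⟪ν, z⟫ : ℝ) * Complex.I) - 1) / ((‖z‖ ^ β : ℝ) : ℂ) with hf
  have hf_int : IntegrableOn f (Metric.ball 0 δ) := by
    refine ((integrableOn_norm_div_rpow n hn δ β hβ).const_mul ‖ν‖).mono'
      (Measurable.aestronglyMeasurable (by fun_prop)) (Filter.Eventually.of_forall fun z => ?_)
    have hk : (0 : ℝ) ≤ ‖z‖ ^ β := by positivity
    simp only [hf, norm_div, Complex.norm_real, Real.norm_of_nonneg hk]
    rw [← mul_div_assoc]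
    gcongr
    rw [mul_comm]
    exact Real.norm_exp_I_mul_ofReal_sub_one_le.trans (norm_inner_le_norm ν z)
  have hball : (fun z : EuclideanSpace ℝ (Fin n) => -z) ⁻¹' Metric.ball 0 δ = Metric.ball 0 δ := by
    ext z; simp
  have hmp := Measure.measurePreserving_neg (volume : Measure (EuclideanSpace ℝ (Fin n)))
  have hemb := (MeasurableEquiv.neg (EuclideanSpace ℝ (Fin n))).measurableEmbedding
  have hneg : ∫ z in Metric.ball 0 δ, f (-z) = ∫ z in Metric.ball 0 δ, f z := by
    have := hmp.setIntegral_preimage_emb hemb f (Metric.ball 0 δ)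
    rwa [hball] at this
  have hf_int_neg : IntegrableOn (fun z => f (-z)) (Metric.ball 0 δ) := by
    have := (hmp.integrableOn_comp_preimage hemb (f := f) (s := Metric.ball 0 δ)).mpr hf_int
    rwa [hball] at this
  have hsum : ∀ z, f z + f (-z) = 2 * (((Real.cos ⟪ν, z⟫ - 1) / ‖z‖ ^ β : ℝ) : ℂ) := by
    intro z
    have h2 := Complex.two_cos ((⟪ν, z⟫ : ℝ) : ℂ)
    simp only [hf, norm_neg, inner_neg_right]
    push_cast
    rw [← add_div, ← mul_div_assoc]
    congr 1
    linear_combination -h2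
  have h2 : 2 * ∫ z in Metric.ball 0 δ, f z = 2 * ((∫ z in Metric.ball
      (0 : EuclideanSpace ℝ (Fin n)) δ, (Real.cos ⟪ν, z⟫ - 1) / ‖z‖ ^ β : ℝ) : ℂ) := by
    symm
    rw [← integral_complex_ofReal, ← integral_const_mul]
    rw [← integral_congr_ae (Filter.Eventually.of_forall hsum), integral_add hf_int hf_int_neg, hneg,
      two_mul]
  exact mul_left_cancel₀ two_ne_zero h2

/-- The Fourier transform turns translation by `z` into multiplication by `e^{iν·z}`. -/
lemma integral_exp_mul_translate_sub (n : ℕ) (u : SchwartzMap (EuclideanSpace ℝ (Fin n)) ℂ)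
    (ν z : EuclideanSpace ℝ (Fin n)) :
    ∫ x, Complex.exp (-(⟪ν, x⟫ : ℝ) * Complex.I) * (u (x + z) - u x) =
      (Complex.exp ((⟪ν, z⟫ : ℝ) * Complex.I) - 1) * fourierTransform n (fun x => u x) ν := by
  have hu : Integrable (fun x => Complex.exp (-(⟪ν, x⟫ : ℝ) * Complex.I) * u x) := by
    refine u.integrable.norm.mono' ?_ (Filter.Eventually.of_forall fun x => ?_)
    · exact (Continuous.mul (by fun_prop) u.continuous).aestronglyMeasurable
    · have he : ‖Complex.exp (-(⟪ν, x⟫ : ℝ) * Complex.I)‖ = 1 := by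
        exact_mod_cast Complex.norm_exp_ofReal_mul_I (-⟪ν, x⟫)
      rw [norm_mul, he, one_mul]
  have hshift : ∀ x, Complex.exp (-(⟪ν, x⟫ : ℝ) * Complex.I) * u (x + z) =
      Complex.exp ((⟪ν, z⟫ : ℝ) * Complex.I) *
        (Complex.exp (-(⟪ν, x + z⟫ : ℝ) * Complex.I) * u (x + z)) := by
    intro x
    rw [← mul_assoc, ← Complex.exp_add, inner_add_right]
    congr 2
    push_cast
    ring
  have hadd : Integrable (fun x => Complex.exp (-(⟪ν, x⟫ : ℝ) * Complex.I) * u (x + z)) := by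
    simp_rw [hshift]
    exact (hu.comp_add_right z).const_mul _
  simp_rw [mul_sub]
  rw [integral_sub hadd hu]
  simp_rw [hshift]
  rw [integral_const_mul,
    integral_add_right_eq_self (fun x => Complex.exp (-(⟪ν, x⟫ : ℝ) * Complex.I) * u x) z]
  simp only [fourierTransform]
  ring

/-- For a Schwartz function `u` on `ℝⁿ`, the nonlocal Laplacian
`L^{δ,β}u(x) = c^{δ,β} ∫_{B_δ(x)} (u(y)-u(x))/‖y-x‖^β dy` is well defined (the integrand
is Lebesgue integrable for each `x`) and its Fourier transform satisfies
`(L^{δ,β}u)^(ν) = m(ν) û(ν)`; i.e. `L^{δ,β}` is the Fourier multiplier operator with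
multiplier `m`. -/
theorem nonlocal_laplacian_fourier_multiplier (n : ℕ) (hn : 1 ≤ n) (δ β : ℝ) (hδ : 0 < δ)
    (hβ : β < (n : ℝ) + 1) (u : SchwartzMap (EuclideanSpace ℝ (Fin n)) ℂ) :
    (∀ x : EuclideanSpace ℝ (Fin n),
      IntegrableOn (fun y => (u y - u x) / ((‖y - x‖ ^ β : ℝ) : ℂ)) (Metric.ball x δ)) ∧
    (∀ ν : EuclideanSpace ℝ (Fin n),
      fourierTransform n (fun x =>
        ((2 * ((n : ℝ) + 2 - β) * Real.Gamma ((n : ℝ) / 2 + 1) /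
          (Real.pi ^ ((n : ℝ) / 2) * δ ^ ((n : ℝ) + 2 - β)) : ℝ) : ℂ) *
          ∫ y in Metric.ball x δ, (u y - u x) / ((‖y - x‖ ^ β : ℝ) : ℂ)) ν =
        ((nonlocalMultiplier n δ β ν : ℝ) : ℂ) * fourierTransform n (fun x => u x) ν) := by
  have hpre : ∀ x : EuclideanSpace ℝ (Fin n),
      (fun z => x + z) ⁻¹' Metric.ball x δ = Metric.ball 0 δ := by
    intro x; ext z; simp
  have hmp := fun x : EuclideanSpace ℝ (Fin n) => measurePreserving_add_left volume x
  have hemb := fun x : EuclideanSpace ℝ (Fin n) => measurableEmbedding_addLeft x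
  refine ⟨fun x => ?_, fun ν => ?_⟩
  · rw [← (hmp x).integrableOn_comp_preimage (hemb x), hpre]
    obtain ⟨C, hC⟩ := exists_translate_sub_bound n δ hδ u
    have hu : Measurable u := u.continuous.measurable
    refine ((integrableOn_norm_div_rpow n hn δ β hβ).const_mul
      (C * (1 + ‖x‖) ^ (-((n : ℝ) + 1)))).mono'
      (Measurable.aestronglyMeasurable (by unfold Function.comp; fun_prop)) ?_
    filter_upwards [ae_restrict_mem Metric.isOpen_ball.measurableSet] with z hz
    have hk : (0 : ℝ) ≤ ‖z‖ ^ β := by positivity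
    simp only [Function.comp, add_sub_cancel_left, norm_div, Complex.norm_real,
      Real.norm_of_nonneg hk]
    rw [← mul_div_assoc]
    gcongr
    exact hC _ _ hz
  · have htrans : ∀ x : EuclideanSpace ℝ (Fin n),
        ∫ y in Metric.ball x δ, (u y - u x) / ((‖y - x‖ ^ β : ℝ) : ℂ) =
        ∫ z in Metric.ball 0 δ, (u (x + z) - u x) / ((‖z‖ ^ β : ℝ) : ℂ) := by
      intro x
      rw [← (hmp x).setIntegral_preimage_emb (hemb x), hpre]
      simp only [add_sub_cancel_left]
    have hinner : ∀ z : EuclideanSpace ℝ (Fin n),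
        ∫ x, Complex.exp (-(⟪ν, x⟫ : ℝ) * Complex.I) *
          ((u (x + z) - u x) / ((‖z‖ ^ β : ℝ) : ℂ)) =
        (Complex.exp ((⟪ν, z⟫ : ℝ) * Complex.I) - 1) / ((‖z‖ ^ β : ℝ) : ℂ) *
          fourierTransform n (fun x => u x) ν := by
      intro z
      simp_rw [← mul_div_assoc]
      rw [integral_div, integral_exp_mul_translate_sub, div_mul_eq_mul_div]
    rw [nonlocalMultiplier, Complex.ofReal_mul, ← integral_exp_sub_one_eq n hn δ β hβ ν,
      fourierTransform]
    generalize 2 * ((n : ℝ) + 2 - β) * Real.Gamma ((n : ℝ) / 2 + 1) /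
      (Real.pi ^ ((n : ℝ) / 2) * δ ^ ((n : ℝ) + 2 - β)) = c
    simp_rw [htrans, mul_left_comm (Complex.exp _) (c : ℂ)]
    rw [integral_const_mul, mul_assoc]
    congr 1
    simp_rw [← integral_const_mul]
    rw [integral_integral_swap (integrable_prod_translate_sub n hn δ β hδ hβ u ν)]
    simp_rw [hinner]
    rw [integral_mul_const]
end

section
/- Let n ≥ 1 be an integer, δ > 0 and β < n, and let m(r) = −r² ₂F₃(1, (n+2−β)/2; 2, (n+2)/2, (n+4−β)/2; −r²δ²/4). Then m has a finite limit at infinity: lim_{r→∞} m(r) = −2n(n+2−β)/(δ²(n−β)); in particular the multipliers of the nonlocal Laplacian are bounded when β < n. -/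
/-!
Write `c = n/2 ≥ 1/2`, `α = (n-β)/2 > 0` and `z = r²δ²/4`. Since `(a)_k/(a+1)_k = a/(a+k)` and
`(1)_k/(2)_k = 1/(k+1)`, shifting the summation index by one gives
`m(r) = (4/δ²)(α+1)c (S(z) - 1/α)` with `S(z) = ∑ (-z)^j / (j! (c)_j (α+j))`, so the claim is that
`S(z) → 0` as `z → ∞`.

Let `F(x) = ₀F₁(; c; -x) = ∑ (-x)^j / (j! (c)_j)`. Comparing coefficients,
`x F'' + c F' + F = 0` and `z S' + α S = F`. The energy `F² + x F'²` has derivative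
`(1 - 2c) F'² ≤ 0`, hence `|F| ≤ 1` and `|F'| ≤ x^(-1/2)` (`besselF_energy`).
The function `F` itself need not decay (for `n = 1` it is `cos (2√x)`), but it is the derivative of
`-P`, where `P = x F' + (c-1) F` is `O(√x)`. Thus `U = S + P/z` satisfies
`z U' + α U = (α-1) P/z → 0`. Multiplying by the integrating factor `z^(α-1)` shows that every
solution of such an equation tends to `0` (`tendsto_zero_of_ode`), and so does `S = U - P/z`.
-/

open Filter
open scoped Topology

/-- The rising Pochhammer symbol `(q)_k = q (q+1) ⋯ (q+k-1)`. -/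
noncomputable def poch (q : ℝ) (k : ℕ) : ℝ := (ascPochhammer ℝ k).eval q

/-- The generalized hypergeometric series `₂F₃(a₁,a₂; b₁,b₂,b₃; x)`. -/
noncomputable def hyp2F3 (a₁ a₂ b₁ b₂ b₃ x : ℝ) : ℝ :=
  ∑' k : ℕ, (poch a₁ k * poch a₂ k) /
    (poch b₁ k * poch b₂ k * poch b₃ k * (Nat.factorial k : ℝ)) * x ^ k

/-- The extended Fourier multiplier of the nonlocal Laplacian, as a function of `r = ‖ν‖`. -/
noncomputable def multiplier (n : ℕ) (δ β r : ℝ) : ℝ :=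
  -r ^ 2 * hyp2F3 1 (((n : ℝ) + 2 - β) / 2) 2 (((n : ℝ) + 2) / 2)
    (((n : ℝ) + 4 - β) / 2) (-(r ^ 2 * δ ^ 2) / 4)

/-! ### Power series with coefficients `O(1/j!)` -/

/-- The sum of the real power series with coefficients `a`. -/
noncomputable def powSum (a : ℕ → ℝ) (x : ℝ) : ℝ := ∑' j : ℕ, a j * x ^ j

/-- The coefficients of the formal derivative. -/
def shiftD (a : ℕ → ℝ) (j : ℕ) : ℝ := ((j : ℝ) + 1) * a (j + 1)

/-- Coefficients bounded by a multiple of `1/j!`: a class of entire series closed under formal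
differentiation. -/
def FactBdd (a : ℕ → ℝ) : Prop := ∃ C : ℝ, ∀ j : ℕ, |a j| ≤ C / (j.factorial : ℝ)

lemma FactBdd.shiftD {a : ℕ → ℝ} (ha : FactBdd a) : FactBdd (shiftD a) := by
  obtain ⟨C, hC⟩ := ha
  refine ⟨C, fun j => ?_⟩
  have h := hC (j + 1)
  have hj : (0 : ℝ) < j.factorial := by positivity
  have hj1 : (0 : ℝ) < (j : ℝ) + 1 := by positivity
  unfold _root_.shiftD
  rw [abs_mul, abs_of_pos hj1]
  rw [Nat.factorial_succ] at h
  push_cast at h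
  calc ((j : ℝ) + 1) * |a (j + 1)| ≤ ((j : ℝ) + 1) * (C / (((j : ℝ) + 1) * j.factorial)) := by
        gcongr
    _ = C / j.factorial := by field_simp

lemma FactBdd.summable {a : ℕ → ℝ} (ha : FactBdd a) (x : ℝ) :
    Summable (fun j : ℕ => a j * x ^ j) := by
  obtain ⟨C, hC⟩ := ha
  refine Summable.of_norm_bounded ((Real.summable_pow_div_factorial |x|).mul_left C) fun j => ?_
  rw [Real.norm_eq_abs, abs_mul, abs_pow]
  calc |a j| * |x| ^ j ≤ C / j.factorial * |x| ^ j := by gcongr; exact hC j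
    _ = C * (|x| ^ j / j.factorial) := by ring

lemma FactBdd.hasDerivAt {a : ℕ → ℝ} (ha : FactBdd a) (x : ℝ) :
    HasDerivAt (powSum a) (powSum (_root_.shiftD a) x) x := by
  have hsum := ha.summable
  obtain ⟨C, hC⟩ := ha.shiftD
  have hR : 0 < |x| + 1 := by positivity
  have key : HasDerivAt (fun y => ∑' j : ℕ, a j * y ^ j)
      (∑' j : ℕ, a j * ((j : ℝ) * x ^ (j - 1))) x := by
    refine hasDerivAt_tsum_of_isPreconnected (t := Metric.ball (0 : ℝ) (|x| + 1)) (y₀ := x)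
      (u := fun j : ℕ => |a j| * ((j : ℝ) * (|x| + 1) ^ (j - 1)))
      (g := fun (j : ℕ) (y : ℝ) => a j * y ^ j)
      (g' := fun (j : ℕ) (y : ℝ) => a j * ((j : ℝ) * y ^ (j - 1)))
      ?_ Metric.isOpen_ball (convex_ball _ _).isPreconnected ?_ ?_ ?_ (hsum x) ?_
    · rw [← summable_nat_add_iff 1]
      refine Summable.of_norm_bounded
        ((Real.summable_pow_div_factorial (|x| + 1)).mul_left C) fun j => ?_
      have h := hC j
      unfold _root_.shiftD at h
      rw [abs_mul, abs_of_pos (by positivity : (0 : ℝ) < (j : ℝ) + 1)] at h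
      rw [Real.norm_of_nonneg (by positivity)]
      push_cast
      calc |a (j + 1)| * (((j : ℝ) + 1) * (|x| + 1) ^ j)
          = (((j : ℝ) + 1) * |a (j + 1)|) * (|x| + 1) ^ j := by ring
        _ ≤ C / j.factorial * (|x| + 1) ^ j := by gcongr
        _ = C * ((|x| + 1) ^ j / j.factorial) := by ring
    · intro j y _
      exact (hasDerivAt_pow j y).const_mul (a j)
    · intro j y hy
      have hy' : |y| ≤ |x| + 1 := by simpa using (Metric.mem_ball.1 hy).le
      rw [Real.norm_eq_abs, abs_mul, abs_mul, abs_pow, Nat.abs_cast]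
      gcongr
    · simp
    · simp
  have h2 : powSum (_root_.shiftD a) x = ∑' j : ℕ, a j * ((j : ℝ) * x ^ (j - 1)) := by
    rw [tsum_eq_zero_add' (f := fun j : ℕ => a j * ((j : ℝ) * x ^ (j - 1)))]
    · simp only [powSum, _root_.shiftD, Nat.cast_zero, zero_mul, mul_zero, zero_add]
      refine tsum_congr fun j => ?_
      push_cast
      ring
    · refine (ha.shiftD.summable x).congr fun j => ?_
      simp only [_root_.shiftD]
      push_cast
      ring
  rw [h2]
  exact key

lemma FactBdd.hasSum {a : ℕ → ℝ} (ha : FactBdd a) (x : ℝ) :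
    HasSum (fun j : ℕ => a j * x ^ j) (powSum a x) := (ha.summable x).hasSum

/-- The Euler operator `x d/dx` multiplies the `j`-th coefficient by `j`. -/
lemma FactBdd.hasSum_euler {a : ℕ → ℝ} (ha : FactBdd a) (x : ℝ) :
    HasSum (fun j : ℕ => (j : ℝ) * a j * x ^ j) (x * powSum (_root_.shiftD a) x) := by
  rw [← hasSum_nat_add_iff' 1]
  have h := (ha.shiftD.hasSum x).mul_left x
  simp only [Finset.range_one, Finset.sum_singleton, Nat.cast_zero, zero_mul, sub_zero]
  refine h.congr_fun ?_
  intro j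
  simp only [_root_.shiftD]
  push_cast
  ring

/-! ### The functions `F` and `S` -/

lemma poch_zero (q : ℝ) : poch q 0 = 1 := by simp [poch]

lemma poch_succ (q : ℝ) (k : ℕ) : poch q (k + 1) = poch q k * (q + k) := by
  simp [poch, ascPochhammer_succ_eval]

lemma poch_succ_left (q : ℝ) (k : ℕ) : poch q (k + 1) = q * poch (q + 1) k := by
  induction k with
  | zero => simp [poch_succ, poch_zero]
  | succ k ih => rw [poch_succ, ih, poch_succ]; push_cast; ring

lemma poch_pos {q : ℝ} (hq : 0 < q) (k : ℕ) : 0 < poch q k := ascPochhammer_pos k q hq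

lemma poch_one (k : ℕ) : poch 1 k = k.factorial := by
  induction k with
  | zero => simp [poch_zero]
  | succ k ih => rw [poch_succ, ih, Nat.factorial_succ]; push_cast; ring

lemma poch_two (k : ℕ) : poch 2 k = (k + 1).factorial := by
  have h := poch_succ_left 1 k
  rw [poch_one] at h
  rw [h]; norm_num

lemma half_le_poch {c : ℝ} (hc : 1 / 2 ≤ c) (k : ℕ) : 1 / 2 ≤ poch c k := by
  rcases k with _ | k
  · rw [poch_zero]; norm_num
  · have h1 : 1 ≤ poch (c + 1) k := by
      induction k with
      | zero => rw [poch_zero]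
      | succ k ih =>
        rw [poch_succ]
        have : (0 : ℝ) ≤ k := by positivity
        nlinarith
    rw [poch_succ_left]
    nlinarith

/-- The coefficients of `F(x) = ₀F₁(; c; -x)`. -/
noncomputable def coefF (c : ℝ) (j : ℕ) : ℝ := (-1) ^ j / ((j.factorial : ℝ) * poch c j)

/-- The coefficients of `S(z) = ∑ (-z)^j / (j! (c)_j (α+j))`. -/
noncomputable def coefS (c α : ℝ) (j : ℕ) : ℝ := coefF c j / (α + j)

lemma factBdd_coefF {c : ℝ} (hc : 1 / 2 ≤ c) : FactBdd (coefF c) := by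
  refine ⟨2, fun j => ?_⟩
  have h := half_le_poch hc j
  have hp : 0 < poch c j := by linarith
  have hj : (0 : ℝ) < j.factorial := by positivity
  unfold coefF
  rw [abs_div, abs_pow, abs_neg, abs_one, one_pow, abs_of_pos (by positivity),
    div_le_div_iff₀ (by positivity) hj]
  nlinarith

lemma factBdd_coefS {c α : ℝ} (hc : 1 / 2 ≤ c) (hα : 0 < α) : FactBdd (coefS c α) := by
  obtain ⟨C, hC⟩ := factBdd_coefF hc
  refine ⟨C / α, fun j => ?_⟩
  have hj : (0 : ℝ) ≤ j := by positivity
  unfold coefS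
  rw [abs_div, abs_of_pos (by positivity : 0 < α + (j : ℝ))]
  calc |coefF c j| / (α + j) ≤ |coefF c j| / α := by gcongr; linarith
    _ ≤ C / j.factorial / α := by gcongr; exact hC j
    _ = C / α / j.factorial := by ring

lemma coefF_succ {c : ℝ} (hc : 1 / 2 ≤ c) (j : ℕ) :
    ((j : ℝ) + c) * shiftD (coefF c) j = -coefF c j := by
  have hp : 0 < poch c j := poch_pos (by linarith) j
  have hj : (0 : ℝ) < j.factorial := by positivity
  have hcj : 0 < c + (j : ℝ) := by positivity
  simp only [shiftD, coefF, poch_succ, Nat.factorial_succ, pow_succ]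
  push_cast
  field_simp
  ring

/-- The Bessel-type equation `x F'' + c F' + F = 0`. -/
lemma odeF {c : ℝ} (hc : 1 / 2 ≤ c) (x : ℝ) :
    x * powSum (shiftD (shiftD (coefF c))) x + c * powSum (shiftD (coefF c)) x
      + powSum (coefF c) x = 0 := by
  have hF := factBdd_coefF hc
  have h := ((hF.shiftD.hasSum_euler x).add ((hF.shiftD.hasSum x).mul_left c)).add (hF.hasSum x)
  refine h.unique ?_
  convert hasSum_zero (α := ℝ) (β := ℕ) using 2 with j
  linear_combination x ^ j * coefF_succ hc j

/-- The equation `z S' + α S = F`. -/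
lemma odeS {c α : ℝ} (hc : 1 / 2 ≤ c) (hα : 0 < α) (x : ℝ) :
    x * powSum (shiftD (coefS c α)) x + α * powSum (coefS c α) x = powSum (coefF c) x := by
  have hS := factBdd_coefS hc hα
  have h := (hS.hasSum_euler x).add ((hS.hasSum x).mul_left α)
  refine h.unique ?_
  convert (factBdd_coefF hc).hasSum x using 2 with j
  have : α + (j : ℝ) ≠ 0 := by positivity
  simp only [coefS]
  field_simp
  ring

lemma powSum_zero (a : ℕ → ℝ) : powSum a 0 = a 0 := by
  unfold powSum
  rw [tsum_eq_single 0 (fun j hj => by simp [hj])]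
  simp

/-- The energy `F² + x F'²` is nonincreasing on `[0, ∞)` because `c ≥ 1/2`, so it stays below its
value `1` at the origin. -/
lemma besselF_energy {c : ℝ} (hc : 1 / 2 ≤ c) {x : ℝ} (hx : 0 ≤ x) :
    powSum (coefF c) x ^ 2 + x * powSum (shiftD (coefF c)) x ^ 2 ≤ 1 := by
  have hF := factBdd_coefF hc
  set E : ℝ → ℝ := fun x => powSum (coefF c) x ^ 2 + x * powSum (shiftD (coefF c)) x ^ 2 with hE
  have hd : ∀ y, HasDerivAt E ((1 - 2 * c) * powSum (shiftD (coefF c)) y ^ 2) y := by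
    intro y
    have h := ((hF.hasDerivAt y).pow 2).add
      ((hasDerivAt_id y).mul ((hF.shiftD.hasDerivAt y).pow 2))
    refine h.congr_deriv ?_
    simp only [id, Pi.pow_apply]
    push_cast
    linear_combination (2 * powSum (shiftD (coefF c)) y) * odeF hc y
  have hanti : Antitone E := by
    refine antitone_of_deriv_nonpos (fun y => (hd y).differentiableAt) fun y => ?_
    rw [(hd y).deriv]
    exact mul_nonpos_of_nonpos_of_nonneg (by linarith) (sq_nonneg _)
  have h0 : E 0 = 1 := by simp [hE, powSum_zero, coefF, poch_zero]
  exact h0 ▸ hanti hx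

/-! ### Decay for `z U' + α U = g` -/

/-- If `z U' + α U` is eventually at least `-α ε`, then `z^α (U + ε)` is eventually nondecreasing,
which bounds `U` from below by `-2ε` for large `z`. -/
lemma eventually_lower_of_ode {α ε : ℝ} (hα : 0 < α) (hε : 0 < ε) {U U' : ℝ → ℝ}
    (hU : ∀ z, 0 < z → HasDerivAt U (U' z) z)
    (hg : ∀ᶠ z in atTop, -(α * ε) ≤ z * U' z + α * U z) :
    ∀ᶠ z in atTop, -(2 * ε) ≤ U z := by
  obtain ⟨X, hX⟩ := eventually_atTop.1 (hg.and (eventually_ge_atTop (1 : ℝ)))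
  have hX1 : 1 ≤ X := (hX X le_rfl).2
  set H : ℝ → ℝ := fun z => z ^ α * (U z + ε) with hH
  have hd : ∀ z, 0 < z → HasDerivAt H (z ^ (α - 1) * (z * U' z + α * U z + α * ε)) z := by
    intro z hz
    have h := (Real.hasDerivAt_rpow_const (p := α) (Or.inl hz.ne')).mul ((hU z hz).add_const ε)
    refine h.congr_deriv ?_
    have : z ^ α = z ^ (α - 1) * z := by
      rw [← Real.rpow_add_one hz.ne']; congr 1; ring
    rw [this]
    ring
  have hmono : MonotoneOn H (Set.Ici X) := by
    refine monotoneOn_of_deriv_nonneg (convex_Ici X) ?_ ?_ ?_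
    · intro z hz
      exact (hd z (by linarith [Set.mem_Ici.1 hz])).continuousAt.continuousWithinAt
    · intro z hz
      rw [interior_Ici] at hz
      exact (hd z (by linarith [Set.mem_Ioi.1 hz])).differentiableAt.differentiableWithinAt
    · intro z hz
      rw [interior_Ici] at hz
      have hz' : X < z := hz
      have hz0 : 0 < z := by linarith
      rw [(hd z hz0).deriv]
      have := (hX z hz'.le).1
      exact mul_nonneg (Real.rpow_nonneg hz0.le _) (by linarith)
  have hlim : Tendsto (fun z : ℝ => ε * z ^ α) atTop atTop :=
    (tendsto_rpow_atTop hα).const_mul_atTop hε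
  filter_upwards [hlim.eventually_ge_atTop (-H X), eventually_ge_atTop X] with z hz1 hz2
  have hz0 : 0 < z := by linarith
  have hp : 0 < z ^ α := Real.rpow_pos_of_pos hz0 α
  have hm : H X ≤ z ^ α * (U z + ε) := hmono (Set.mem_Ici.2 le_rfl) hz2 hz2
  have : 0 ≤ z ^ α * (U z + 2 * ε) := by nlinarith
  have := nonneg_of_mul_nonneg_right this hp
  linarith

lemma tendsto_zero_of_ode {α : ℝ} (hα : 0 < α) {U U' : ℝ → ℝ}
    (hU : ∀ z, 0 < z → HasDerivAt U (U' z) z)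
    (hg : Tendsto (fun z => z * U' z + α * U z) atTop (𝓝 0)) :
    Tendsto U atTop (𝓝 0) := by
  rw [Metric.tendsto_nhds]
  intro e he
  have hε : 0 < e / 4 := by positivity
  have hb := (Metric.tendsto_nhds.1 hg) (α * (e / 4)) (by positivity)
  have h1 := eventually_lower_of_ode hα hε hU (by
    filter_upwards [hb] with z hz
    rw [Real.dist_eq, sub_zero] at hz
    linarith [(abs_lt.1 hz).1])
  have h2 := eventually_lower_of_ode (U := fun z => -U z) (U' := fun z => -U' z) hα hε
    (fun z hz => (hU z hz).neg) (by
    filter_upwards [hb] with z hz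
    rw [Real.dist_eq, sub_zero] at hz
    linarith [(abs_lt.1 hz).2])
  filter_upwards [h1, h2] with z hz1 hz2
  rw [Real.dist_eq, sub_zero, abs_lt]
  constructor <;> linarith

/-! ### Decay of `S` and the limit of the multiplier -/

/-- `P(z)/z → 0` for `P = z F' + (c-1) F`. -/
lemma tendsto_P {c : ℝ} (hc : 1 / 2 ≤ c) :
    Tendsto (fun z => powSum (shiftD (coefF c)) z + (c - 1) * powSum (coefF c) z / z)
      atTop (𝓝 0) := by
  have hinv : Tendsto (fun z : ℝ => (√z)⁻¹) atTop (𝓝 0) :=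
    tendsto_inv_atTop_zero.comp Real.tendsto_sqrt_atTop
  have hb : Tendsto (fun z : ℝ => (√z)⁻¹ + |c - 1| * z⁻¹) atTop (𝓝 0) := by
    simpa using hinv.add (tendsto_inv_atTop_zero.const_mul |c - 1|)
  refine squeeze_zero_norm' ?_ hb
  filter_upwards [eventually_gt_atTop (0 : ℝ)] with z hz
  have hE := besselF_energy hc hz.le
  have h1 : |powSum (coefF c) z| ≤ 1 := by
    rw [← sq_le_one_iff_abs_le_one]
    nlinarith [mul_nonneg hz.le (sq_nonneg (powSum (shiftD (coefF c)) z))]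
  have h2 : |powSum (shiftD (coefF c)) z| ≤ (√z)⁻¹ := by
    refine abs_le_of_sq_le_sq ?_ (by positivity)
    rw [inv_pow, Real.sq_sqrt hz.le, ← one_div, le_div_iff₀ hz]
    nlinarith [sq_nonneg (powSum (coefF c) z)]
  refine (norm_add_le _ _).trans (add_le_add h2 ?_)
  rw [Real.norm_eq_abs, abs_div, abs_mul, abs_of_pos hz, div_eq_mul_inv]
  have : |c - 1| * |powSum (coefF c) z| ≤ |c - 1| := mul_le_of_le_one_right (abs_nonneg _) h1
  gcongr

lemma tendsto_S {c α : ℝ} (hc : 1 / 2 ≤ c) (hα : 0 < α) :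
    Tendsto (powSum (coefS c α)) atTop (𝓝 0) := by
  have hF := factBdd_coefF hc
  have hS := factBdd_coefS hc hα
  set Q : ℝ → ℝ := fun z => powSum (shiftD (coefF c)) z + (c - 1) * powSum (coefF c) z / z with hQ
  have hQ0 : Tendsto Q atTop (𝓝 0) := tendsto_P hc
  have hd : ∀ z, 0 < z → HasDerivAt (fun z => powSum (coefS c α) z + Q z)
      (powSum (shiftD (coefS c α)) z + (powSum (shiftD (shiftD (coefF c))) z
        + ((c - 1) * powSum (shiftD (coefF c)) z * z - (c - 1) * powSum (coefF c) z * 1)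
          / z ^ 2)) z := by
    intro z hz
    exact (hS.hasDerivAt z).add ((hF.shiftD.hasDerivAt z).add
      (((hF.hasDerivAt z).const_mul (c - 1)).div (hasDerivAt_id z) hz.ne'))
  have hU := tendsto_zero_of_ode hα hd (by
    have h : Tendsto (fun z => (α - 1) * Q z) atTop (𝓝 0) := by simpa using hQ0.const_mul (α - 1)
    refine h.congr' ?_
    filter_upwards [eventually_gt_atTop (0 : ℝ)] with z hz
    have e1 := odeF hc z
    have e2 := odeS hc hα z
    simp only [hQ]
    field_simp
    linear_combination -z * e1 - z * e2)
  simpa using hU.sub hQ0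

/-- The multiplier in terms of `S`, obtained by shifting the summation index. -/
lemma multiplier_eq (n : ℕ) (hn : 1 ≤ n) (δ β r : ℝ) (hδ : 0 < δ) (hβ : β < (n : ℝ)) :
    multiplier n δ β r = 4 / δ ^ 2 * (((n : ℝ) + 2 - β) / 2) * ((n : ℝ) / 2) *
      (powSum (coefS ((n : ℝ) / 2) (((n : ℝ) - β) / 2)) (r ^ 2 * δ ^ 2 / 4)
        - 2 / ((n : ℝ) - β)) := by
  have hn' : (1 : ℝ) ≤ n := by exact_mod_cast hn
  set c : ℝ := (n : ℝ) / 2 with hcdef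
  set α : ℝ := ((n : ℝ) - β) / 2 with hαdef
  have hc : 1 / 2 ≤ c := by rw [hcdef]; linarith
  have hα : 0 < α := by rw [hαdef]; linarith
  have e1 : ((n : ℝ) + 2 - β) / 2 = α + 1 := by rw [hαdef]; ring
  have e2 : ((n : ℝ) + 2) / 2 = c + 1 := by rw [hcdef]; ring
  have e3 : ((n : ℝ) + 4 - β) / 2 = α + 1 + 1 := by rw [hαdef]; ring
  have e4 : 2 / ((n : ℝ) - β) = coefS c α 0 := by
    simp [coefS, coefF, poch_zero, hαdef]
  have hsplit : powSum (coefS c α) (r ^ 2 * δ ^ 2 / 4) - coefS c α 0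
      = ∑' k : ℕ, coefS c α (k + 1) * (r ^ 2 * δ ^ 2 / 4) ^ (k + 1) := by
    unfold powSum
    rw [((factBdd_coefS hc hα).summable _).tsum_eq_zero_add]
    simp
  unfold multiplier hyp2F3
  rw [e1, e2, e3, e4, hsplit, ← tsum_mul_left, ← tsum_mul_left]
  refine tsum_congr fun k => ?_
  have hc0 : 0 < c := by linarith
  have hp1 : 0 < poch (c + 1) k := poch_pos (by linarith) k
  have hp2 : 0 < poch (α + 1) k := poch_pos (by linarith) k
  have hp3 : 0 < poch (α + 1 + 1) k := poch_pos (by linarith) k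
  have hk : (0 : ℝ) < k.factorial := by positivity
  have hαk : 0 < α + 1 + (k : ℝ) := by positivity
  -- `(a)_k (a+k) = a (a+1)_k` for `a = α + 1`
  have hrel : poch (α + 1) k = (α + 1) * poch (α + 1 + 1) k / (α + 1 + k) := by
    rw [eq_div_iff hαk.ne', ← poch_succ, poch_succ_left]
  have hneg : (-(r ^ 2 * δ ^ 2) / 4) ^ k = (-1) ^ k * (r ^ 2 * δ ^ 2 / 4) ^ k := by
    rw [neg_div, neg_pow]
  have hαk' : α + ((k + 1 : ℕ) : ℝ) = α + 1 + k := by push_cast; ring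
  rw [hrel, hneg, poch_one, poch_two, coefS, coefF, hαk', poch_succ_left,
    Nat.factorial_succ]
  push_cast
  field_simp
  ring

/-- For `β < n` the multipliers are bounded, with finite limit at
infinity: `m(r) → -2n(n+2-β)/(δ²(n-β))` as `r → ∞`. -/
theorem multiplier_bounded_limit (n : ℕ) (hn : 1 ≤ n) (δ β : ℝ) (hδ : 0 < δ)
    (hβ : β < (n : ℝ)) :
    Tendsto (fun r : ℝ => multiplier n δ β r) atTop
      (𝓝 (-(2 * (n : ℝ) * ((n : ℝ) + 2 - β)) / (δ ^ 2 * ((n : ℝ) - β)))) := by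
  have hn' : (1 : ℝ) ≤ n := by exact_mod_cast hn
  have hz : Tendsto (fun r : ℝ => r ^ 2 * δ ^ 2 / 4) atTop atTop :=
    ((tendsto_pow_atTop two_ne_zero).atTop_mul_const (by positivity)).atTop_div_const (by norm_num)
  have hS := (tendsto_S (c := (n : ℝ) / 2) (α := ((n : ℝ) - β) / 2) (by linarith)
    (by linarith)).comp hz
  have h := (hS.sub_const (2 / ((n : ℝ) - β))).const_mul
    (4 / δ ^ 2 * (((n : ℝ) + 2 - β) / 2) * ((n : ℝ) / 2))
  have hne : (n : ℝ) - β ≠ 0 := by linarith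
  convert h using 2
  · exact multiplier_eq n hn δ β _ hδ hβ
  · field_simp
    ring
end
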